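/- arXiv:1912.05226 — 2 statements merged into one kernel-verified Lean document; each statement's English description precedes it below -/
import Mathlib

section
/- Let L be a nonempty countable linear order with a least element. Let D_m denote the set of all many-one degrees other than deg_m(∅) and deg_m(ℕ), partially ordered by many-one reducibility. Then there exists a subset S of D_m that is downward closed in D_m (i.e., if d ∈ S, d' ∈ D_m and d' ≤ d, then d' ∈ S) and is order-isomorphic to L. -/
/-- The many-one degrees other than the degrees of `∅` and `ℕ`. -/
def Dm : Set ManyOneDegree :=
  {d | d ≠ ManyOneDegree.of (fun _ : ℕ => False) ∧ d ≠ ManyOneDegree.of (fun _ : ℕ => True)}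

/-!
The sets `A l`, `l : L`, are built by forcing. A condition gives finitely many `l` a computable
infinite word whose letters are bits or indeterminates, each indeterminate belonging to a column
`x : L`; the letters of the `l`-th word are exactly the bits and the indeterminates of the columns
`x` of the condition with `⊥ < x ≤ l`. Conditions are extended by substituting letters for
indeterminates, and `A l` is the limit of the `l`-th words along a generic ideal.

If all letters that the `l`-th word takes along `f` occur in the `k`-th word along `f'`, then an
unbounded search reduces `A l ∘ f` to `A k ∘ f'`; in particular `A l ≤₀ A k` for `l ≤ k`. For
`i < j` the `j`-th word contains an indeterminate that the `i`-th word does not, which leaves room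
to refute any given reduction of `A j` to `A i`. For the initial segment property, let `f` be
computable and let `j` be the largest column with infinitely many indeterminates in the `l`-th
word along `f`. Replace the finitely many indeterminates of higher columns by bits, and substitute
for the indeterminates of column `j` so that those on the subsequence run through all letters
allowed for `j`: then `A l ∘ f` is equivalent to `A j`. If there is no such `j`, then `A l ∘ f`
becomes computable.
-/

namespace ManyOneForcing

open Set

section Computability

variable {α : Type*} [Primcodable α]

theorem primrecPred_mem_of_finite {s : Set α} (hs : s.Finite) : PrimrecPred (· ∈ s) := by
  induction s, hs using Set.Finite.induction_on with
  | empty => exact ⟨inferInstance, by simpa using Primrec.const false⟩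
  | insert _ _ ih => exact (Primrec.eq.comp Primrec.id (Primrec.const _)).or ih

theorem exists_computable_strictMono {k : ℕ → ℕ} (hk : Computable k) (hinf : (range k).Infinite) :
    ∃ q : ℕ → ℕ, Computable q ∧ StrictMono q ∧ range q ⊆ range k := by
  have hlarge : ∀ s, ∃ z, s < k z := fun s => by simpa using hinf.exists_gt s
  let next : ℕ → ℕ := fun s => k (Nat.find (hlarge s))
  have hnext : Computable next :=
    hk.comp <| Computable.find ((Primrec.nat_lt.decide.to_comp.comp Computable.fst
      (hk.comp Computable.snd)).computablePred) hlarge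
  have hlt : ∀ s, s < next s := fun s => Nat.find_spec (hlarge s)
  let q : ℕ → ℕ := fun m => Nat.rec (next 0) (fun _ s => next s) m
  refine ⟨q, ?_, ?_, ?_⟩
  · exact Computable.nat_rec Computable.id (Computable.const _)
      (hnext.comp (Computable.snd.comp Computable.snd)).to₂
  · exact strictMono_nat_of_lt_succ fun m => hlt (q m)
  · rintro _ ⟨_ | m, rfl⟩ <;> exact mem_range_self _

theorem exists_computable_image_range_eq {k : ℕ → ℕ} (hk : Computable k)
    (hinf : (range k).Infinite) {u : ℕ → α} (hu : Computable u) :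
    ∃ c : ℕ → α, Computable c ∧ range c = range u ∧ c '' range k = range u := by
  obtain ⟨q, hq, hmono, hqk⟩ := exists_computable_strictMono hk hinf
  have hexists : ∀ n, ∃ m, n ≤ q m := fun n => ⟨n, hmono.le_apply⟩
  let c : ℕ → α := fun n => u (Nat.find (hexists n))
  have hc : Computable c :=
    hu.comp <| Computable.find ((Primrec.nat_le.decide.to_comp.comp Computable.fst
      (hq.comp Computable.snd)).computablePred) hexists
  have hcq : ∀ m, c (q m) = u m := fun m =>
    congrArg u ((Nat.find_eq_iff _).2 ⟨le_rfl, fun n hn => (hmono hn).not_ge⟩)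
  have hcu : range c ⊆ range u := range_comp_subset_range _ u
  have huc : range u ⊆ c '' range k := by
    rintro _ ⟨m, rfl⟩
    exact ⟨q m, hqk (mem_range_self m), hcq m⟩
  exact ⟨c, hc, hcu.antisymm (huc.trans (image_subset_range c _)),
    ((image_subset_range c _).trans hcu).antisymm huc⟩

theorem nonempty_primcodable (α : Type*) [Countable α] : Nonempty (Primcodable α) := by
  rcases finite_or_infinite α with h | h
  · obtain ⟨n, ⟨e⟩⟩ := Finite.exists_equiv_fin α
    exact ⟨Primcodable.ofEquiv (Fin n) e⟩
  · obtain ⟨_⟩ := nonempty_denumerable α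
    exact ⟨Primcodable.ofDenumerable α⟩

end Computability

theorem of_mem_Dm_iff {B : ℕ → Prop} :
    ManyOneDegree.of B ∈ Dm ↔ (∃ z, B z) ∧ ∃ z, ¬B z := by
  refine ⟨fun ⟨hFalse, hTrue⟩ => ⟨?_, ?_⟩, fun ⟨⟨y, hy⟩, z, hz⟩ => ⟨fun h => ?_, fun h => ?_⟩⟩
  · by_contra! hB
    exact hFalse (congrArg _ (funext fun z => eq_false (hB z)))
  · by_contra! hB
    exact hTrue (congrArg _ (funext fun z => eq_true (hB z)))
  · obtain ⟨f, -, hf⟩ := ManyOneDegree.of_le_of.1 h.le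
    exact (hf y).1 hy
  · obtain ⟨f, -, hf⟩ := ManyOneDegree.of_le_of.1 h.le
    exact hz ((hf z).2 trivial)

/-- The rule of Rasiowa and Sikorski for countably many cofinal sets. -/
theorem exists_ideal_forall_exists_mem {P ι : Type*} [Preorder P] [Nonempty P] [Countable ι]
    {D : ι → Set P} (hD : ∀ i, IsCofinal (D i)) : ∃ I : Order.Ideal P, ∀ i, ∃ p ∈ I, p ∈ D i := by
  have := Encodable.ofCountable ι
  refine ⟨Order.idealOfCofinals (Classical.arbitrary P) fun i => ⟨D i, hD i⟩, fun i => ?_⟩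
  obtain ⟨p, hpD, hpI⟩ := Order.cofinal_meets_idealOfCofinals _ (fun i => ⟨D i, hD i⟩) i
  exact ⟨p, hpI, hpD⟩

section Letter

variable {L : Type*}

/-- The letters of the words in a forcing condition: a bit `Sum.inl v` is decided, while
`Sum.inr (x, n)` is the `n`-th indeterminate of column `x`. -/
abbrev Letter (L : Type*) := Bool ⊕ L × ℕ

/-- All bits, and the indeterminates whose column lies in `S`. -/
def lettersOver (S : Set L) : Set (Letter L) :=
  {a | ∀ x n, a = Sum.inr (x, n) → x ∈ S}

@[simp]
theorem inl_mem_lettersOver {S : Set L} {v : Bool} : Sum.inl v ∈ lettersOver S := by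
  simp [lettersOver]

@[simp]
theorem inr_mem_lettersOver {S : Set L} {x : L} {n : ℕ} :
    Sum.inr (x, n) ∈ lettersOver S ↔ x ∈ S := by
  simp [lettersOver]

theorem lettersOver_mono {S T : Set L} (h : S ⊆ T) : lettersOver S ⊆ lettersOver T :=
  fun _ ha x n hax => h (ha x n hax)

theorem lettersOver_empty : lettersOver (∅ : Set L) = range Sum.inl := by
  ext (v | ⟨x, n⟩) <;> simp

/-- The map on letters that fixes the bits and substitutes `σ y` for each indeterminate `y`. -/
def subst (σ : L × ℕ → Letter L) : Letter L → Letter L :=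
  Sum.elim Sum.inl σ

@[simp]
theorem subst_inl {σ : L × ℕ → Letter L} {v : Bool} : subst σ (Sum.inl v) = Sum.inl v :=
  rfl

@[simp]
theorem subst_inr {σ : L × ℕ → Letter L} {y : L × ℕ} : subst σ (Sum.inr y) = σ y :=
  rfl

theorem subst_id (a : Letter L) : subst Sum.inr a = a := by
  cases a <;> rfl

theorem subst_subst (σ τ : L × ℕ → Letter L) (a : Letter L) :
    subst τ (subst σ a) = subst (subst τ ∘ σ) a := by
  cases a <;> rfl

theorem computable_subst [Primcodable L] {σ : L × ℕ → Letter L} (hσ : Computable σ) :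
    Computable (subst σ) :=
  (Computable.sumCasesOn Computable.id (Computable.sumInl.comp Computable.snd).to₂
    (hσ.comp Computable.snd).to₂).of_eq fun a => by cases a <;> rfl

theorem image_subst_lettersOver {S T : Set L} {σ : L × ℕ → Letter L}
    (hmaps : ∀ x ∈ S, ∀ n, σ (x, n) ∈ lettersOver T)
    (hsurj : ∀ y ∈ T, ∀ m, ∃ x ∈ S, ∃ n, σ (x, n) = Sum.inr (y, m)) :
    subst σ '' lettersOver S = lettersOver T := by
  refine Subset.antisymm (image_subset_iff.2 ?_) ?_
  · rintro (v | ⟨x, n⟩) ha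
    · simp
    · exact hmaps x (inr_mem_lettersOver.1 ha) n
  · rintro (v | ⟨y, m⟩) ha
    · exact ⟨Sum.inl v, by simp, rfl⟩
    · obtain ⟨x, hx, n, hxn⟩ := hsurj y (inr_mem_lettersOver.1 ha) m
      exact ⟨Sum.inr (x, n), by simpa using hx, hxn⟩

theorem exists_computable_range_eq_lettersOver [Primcodable L] {S : Set L} (hS : S.Finite) :
    ∃ u : ℕ → Letter L, Computable u ∧ range u = lettersOver S := by
  classical
  let σ : L × ℕ → Letter L := fun y => if y.1 ∈ S then Sum.inr y else Sum.inl false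
  have hσ : Computable σ :=
    (Primrec.ite ((primrecPred_mem_of_finite hS).comp Primrec.fst) Primrec.sumInr
      (Primrec.const _)).to_comp
  let e : ℕ → Letter L := fun n => (Encodable.decode n).getD (Sum.inl false)
  have he : Computable e := Computable.option_getD Computable.decode (Computable.const _)
  have hsurj : Function.Surjective e := fun a =>
    ⟨Encodable.encode a, by simp only [e, Encodable.encodek, Option.getD_some]⟩
  refine ⟨subst σ ∘ e, (computable_subst hσ).comp he, ?_⟩
  have huniv : lettersOver (univ : Set L) = univ := by
    ext (v | ⟨x, n⟩) <;> simp
  rw [hsurj.range_comp, ← image_univ, ← huniv]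
  refine image_subst_lettersOver (fun x _ n => ?_) fun y hy m => ⟨y, trivial, m, if_pos hy⟩
  by_cases hx : x ∈ S <;> simp [σ, hx]

open Classical in
/-- The substitution of the bit `v` for the first `N` indeterminates of each column in `t`;
the remaining ones are shifted down, so that no indeterminate gets lost. -/
noncomputable def truncation (t : Set L) (N : ℕ) (v : Bool) : L × ℕ → Letter L := fun y =>
  if y.1 ∈ t then (if y.2 < N then Sum.inl v else Sum.inr (y.1, y.2 - N)) else Sum.inr y

section truncation

variable {t : Set L} {N n : ℕ} {v : Bool} {x : L}

theorem truncation_of_lt (hx : x ∈ t) (hn : n < N) : truncation t N v (x, n) = Sum.inl v := by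
  simp [truncation, hx, hn]

theorem truncation_add (hx : x ∈ t) : truncation t N v (x, n + N) = Sum.inr (x, n) := by
  simp [truncation, hx]

theorem truncation_of_notMem (hx : x ∉ t) : truncation t N v (x, n) = Sum.inr (x, n) := by
  simp [truncation, hx]

theorem computable_truncation [Primcodable L] (ht : t.Finite) (N : ℕ) (v : Bool) :
    Computable (truncation t N v) := by
  classical
  have hshift : Primrec fun y : L × ℕ => (Sum.inr (y.1, y.2 - N) : Letter L) :=
    Primrec.sumInr.comp (Primrec.fst.pair (Primrec.nat_sub.comp Primrec.snd (Primrec.const N)))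
  exact (Primrec.ite ((primrecPred_mem_of_finite ht).comp Primrec.fst)
    (Primrec.ite (Primrec.nat_lt.comp Primrec.snd (Primrec.const N)) (Primrec.const _) hshift)
    Primrec.sumInr).to_comp

theorem image_truncation_lettersOver (S t : Set L) (N : ℕ) (v : Bool) :
    subst (truncation t N v) '' lettersOver S = lettersOver S := by
  refine image_subst_lettersOver (fun x hx n => ?_) fun y hy m => ⟨y, hy, ?_⟩
  · unfold truncation
    split_ifs <;> simp [hx]
  · by_cases hyt : y ∈ t
    · exact ⟨m + N, truncation_add hyt⟩
    · exact ⟨m, truncation_of_notMem hyt⟩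

end truncation

section columnSubst

open Classical in
/-- The substitution of the letters `c 0, c 1, …` for the indeterminates of column `j`. -/
noncomputable def columnSubst (j : L) (c : ℕ → Letter L) : L × ℕ → Letter L := fun y =>
  if y.1 = j then c y.2 else Sum.inr y

@[simp]
theorem columnSubst_self (j : L) (c : ℕ → Letter L) (n : ℕ) : columnSubst j c (j, n) = c n :=
  if_pos rfl

theorem columnSubst_of_ne {j x : L} (hx : x ≠ j) (c : ℕ → Letter L) (n : ℕ) :
    columnSubst j c (x, n) = Sum.inr (x, n) :=
  if_neg hx

theorem computable_columnSubst [Primcodable L] (j : L) {c : ℕ → Letter L} (hc : Computable c) :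
    Computable (columnSubst j c) := by
  classical
  exact ((Primrec.eq.comp Primrec.fst (Primrec.const j)).decide.to_comp.cond
    (hc.comp Computable.snd) Computable.sumInr).of_eq fun y => by
      simp [columnSubst, Bool.cond_decide]

theorem image_columnSubst_lettersOver {S T : Set L} {j : L} {c : ℕ → Letter L} (hj : j ∈ S)
    (hST : S ⊆ T) (hc : range c ⊆ lettersOver T)
    (hsurj : ∀ y ∈ insert j (T \ S), ∀ m, Sum.inr (y, m) ∈ range c) :
    subst (columnSubst j c) '' lettersOver S = lettersOver T := by
  refine image_subst_lettersOver (fun x hx n => ?_) fun y hy m => ?_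
  · by_cases hxj : x = j
    · rw [hxj, columnSubst_self]
      exact hc (mem_range_self n)
    · rw [columnSubst_of_ne hxj]
      exact inr_mem_lettersOver.2 (hST hx)
  · by_cases hyS : y ∈ S \ {j}
    · exact ⟨y, hyS.1, m, columnSubst_of_ne hyS.2 c m⟩
    · obtain ⟨n, hn⟩ := hsurj y (by grind) m
      exact ⟨j, hj, n, (columnSubst_self j c n).trans hn⟩

theorem image_columnSubst_lettersOver_of_notMem {S : Set L} {j : L} (hj : j ∉ S)
    (c : ℕ → Letter L) : subst (columnSubst j c) '' lettersOver S = lettersOver S := by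
  have hne : ∀ x ∈ S, x ≠ j := fun x hx hxj => hj (hxj ▸ hx)
  refine image_subst_lettersOver (fun x hx n => ?_) fun y hy m =>
    ⟨y, hy, m, columnSubst_of_ne (hne y hy) c m⟩
  rwa [columnSubst_of_ne (hne x hx), inr_mem_lettersOver]

/-- Letters that split column `x` evenly between the columns `l` and `x`. -/
def interleave (l x : L) : ℕ → Letter L := fun n =>
  Sum.inr (bif n.bodd then l else x, n.div2)

theorem computable_interleave [Primcodable L] (l x : L) : Computable (interleave l x) :=
  (Primrec.sumInr.comp ((Primrec.cond Primrec.nat_bodd (Primrec.const l) (Primrec.const x)).pair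
    Primrec.nat_div2)).to_comp

theorem image_columnSubst_interleave_lettersOver {S : Set L} {x : L} (hx : x ∈ S) (l : L) :
    subst (columnSubst x (interleave l x)) '' lettersOver S = lettersOver (insert l S) := by
  refine image_columnSubst_lettersOver hx (subset_insert l S) ?_ fun y hy m => ?_
  · rintro _ ⟨n, rfl⟩
    cases h : n.bodd <;> simp [interleave, h, hx]
  · obtain rfl | rfl : y = x ∨ y = l := by grind
    · exact ⟨Nat.bit false m, by simp [interleave]⟩
    · exact ⟨Nat.bit true m, by simp [interleave]⟩

theorem exists_computable_image_subst_lettersOver_insert [LinearOrder L] [OrderBot L]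
    [Primcodable L] {S : Set L} (hS : S.Finite) {l : L} (hl : l ∉ S) (hbot : l ≠ ⊥) :
    ∃ σ : L × ℕ → Letter L, Computable σ ∧ ∀ k ∈ S,
      subst σ '' lettersOver (S ∩ Ioc ⊥ k) = lettersOver (insert l S ∩ Ioc ⊥ k) := by
  have hlt : ∀ k ∈ S, l ≤ k → l < k := fun k hk hlk => hlk.lt_of_ne fun h => hl (h ▸ hk)
  have hbelow : ∀ k, ¬l ≤ k → insert l S ∩ Ioc ⊥ k = S ∩ Ioc ⊥ k := fun k hlk =>
    insert_inter_of_notMem fun h => hlk h.2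
  rcases (S ∩ Ioi l).eq_empty_or_nonempty with habove | habove
  · refine ⟨Sum.inr, Computable.sumInr, fun k hk => ?_⟩
    have hlk : ¬l ≤ k := fun h => habove.subset ⟨hk, hlt k hk h⟩
    rw [hbelow k hlk, funext subst_id, image_id']
  · obtain ⟨x, ⟨hx, hlx⟩, hmin⟩ := exists_min_image _ id (hS.inter_of_left (Ioi l)) habove
    refine ⟨columnSubst x (interleave l x),
      computable_columnSubst x (computable_interleave l x), fun k hk => ?_⟩
    by_cases hlk : l ≤ k
    · have hxk : x ≤ k := hmin k ⟨hk, hlt k hk hlk⟩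
      have hxS : x ∈ S ∩ Ioc ⊥ k := ⟨hx, bot_le.trans_lt hlx, hxk⟩
      have hlS : l ∈ Ioc ⊥ k := ⟨bot_lt_iff_ne_bot.2 hbot, hlk⟩
      rw [image_columnSubst_interleave_lettersOver hxS, insert_inter_of_mem hlS]
    · rw [hbelow k hlk, image_columnSubst_lettersOver_of_notMem]
      exact fun h => hlk (hlx.le.trans h.2.2)

end columnSubst

/-- The indices of the indeterminates of column `x` that belong to `R`. -/
def columnIndices (R : Set (Letter L)) (x : L) : Set ℕ :=
  {n | Sum.inr (x, n) ∈ R}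

theorem exists_subst_truncation_mem_lettersOver_compl {t : Set L} (ht : t.Finite)
    {R : Set (Letter L)} (hR : ∀ x ∈ t, (columnIndices R x).Finite) (v : Bool) :
    ∃ N, ∀ a ∈ R, subst (truncation t N v) a ∈ lettersOver tᶜ := by
  obtain ⟨N, hN⟩ := (ht.biUnion hR).bddAbove
  refine ⟨N + 1, ?_⟩
  rintro (w | ⟨x, n⟩) ha
  · simp
  by_cases hx : x ∈ t
  · have hn : n < N + 1 := Nat.lt_succ_of_le (hN (mem_biUnion hx ha))
    simp [truncation_of_lt hx hn]
  · simp [truncation_of_notMem hx, hx]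

theorem exists_computable_range_eq_columnIndices [Primcodable L] {h : ℕ → Letter L}
    (hh : Computable h) {x : L} (hne : (columnIndices (range h) x).Nonempty) :
    ∃ k : ℕ → ℕ, Computable k ∧ range k = columnIndices (range h) x := by
  classical
  obtain ⟨m, hm⟩ := hne
  let index : Letter L → ℕ := Sum.elim (fun _ => m) fun y => if y.1 = x then y.2 else m
  have hcolumn : Primrec₂ fun (_ : Letter L) (y : L × ℕ) => if y.1 = x then y.2 else m :=
    Primrec.ite (Primrec.eq.comp (Primrec.fst.comp Primrec.snd) (Primrec.const x))
      (Primrec.snd.comp Primrec.snd) (Primrec.const m)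
  have hindex : Computable index :=
    ((Primrec.sumCasesOn Primrec.id (Primrec.const m).to₂ hcolumn).of_eq fun a => by
      cases a <;> rfl).to_comp
  refine ⟨index ∘ h, hindex.comp hh, Subset.antisymm ?_ ?_⟩
  · rintro _ ⟨z, rfl⟩
    rcases hz : h z with v | ⟨y, n⟩
    · simpa [index, hz] using hm
    · by_cases hy : y = x
      · simpa [index, hz, hy, columnIndices] using ⟨z, hy ▸ hz⟩
      · simpa [index, hz, hy] using hm
  · rintro n ⟨z, hz⟩
    exact ⟨z, by simp [index, hz]⟩

end Letter

/-- A forcing condition: words indexed by `L`, of which only those with index in the finite set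
`support` are a commitment. The letters of the `l`-th word are the bits and the indeterminates of
the columns `x ∈ support` with `⊥ < x ≤ l`; column `⊥` is left out so that the set at `⊥` is
computable. -/
structure Condition (L : Type*) [Preorder L] [OrderBot L] [Primcodable L] where
  support : Set L
  finite_support : support.Finite
  bot_mem_support : ⊥ ∈ support
  word : L → ℕ → Letter L
  computable_word : ∀ l, Computable (word l)
  range_word : ∀ l, range (word l) = lettersOver (support ∩ Ioc ⊥ l)

namespace Condition

section Preorder

variable {L : Type*} [Preorder L] [OrderBot L] [Primcodable L]

/-- `p ≤ q` means that `q` extends `p`: a single substitution turns all the words to which `p`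
is committed into those of `q`. -/
instance : Preorder (Condition L) where
  le p q := p.support ⊆ q.support ∧
    ∃ σ : L × ℕ → Letter L, ∀ l ∈ p.support, ∀ z, q.word l z = subst σ (p.word l z)
  le_refl p := ⟨Subset.rfl, Sum.inr, fun _ _ _ => (subst_id _).symm⟩
  le_trans p q r := by
    rintro ⟨hpq, σ, hσ⟩ ⟨hqr, τ, hτ⟩
    refine ⟨hpq.trans hqr, subst τ ∘ σ, fun l hl z => ?_⟩
    rw [hτ l (hpq hl), hσ l hl, subst_subst]

instance : Nonempty (Condition L) := by
  choose u hu hrange using fun l : L =>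
    exists_computable_range_eq_lettersOver ((finite_singleton (⊥ : L)).inter_of_left (Ioc ⊥ l))
  exact ⟨⟨{⊥}, finite_singleton ⊥, rfl, u, hu, hrange⟩⟩

variable {p : Condition L} {l : L}

theorem range_word_bot (p : Condition L) : range (p.word ⊥) = range Sum.inl := by
  rw [p.range_word, Ioc_self, inter_empty, lettersOver_empty]

theorem range_word_mono (p : Condition L) : Monotone fun l => range (p.word l) := fun l k h => by
  simp only [p.range_word]
  exact lettersOver_mono (inter_subset_inter_right _ (Ioc_subset_Ioc_right h))

theorem exists_le_word_eq_subst (p : Condition L) {s : Set L} (hs : s.Finite)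
    (hps : p.support ⊆ s) {σ : L × ℕ → Letter L} (hσ : Computable σ)
    (himage : ∀ l ∈ p.support,
      subst σ '' lettersOver (p.support ∩ Ioc ⊥ l) = lettersOver (s ∩ Ioc ⊥ l)) :
    ∃ q, p ≤ q ∧ q.support = s ∧ ∀ l ∈ p.support, q.word l = subst σ ∘ p.word l := by
  classical
  choose u hu hrange using fun l : L =>
    exists_computable_range_eq_lettersOver (hs.inter_of_left (Ioc ⊥ l))
  let word : L → ℕ → Letter L := fun l => if l ∈ p.support then subst σ ∘ p.word l else u l
  have hword : ∀ l ∈ p.support, word l = subst σ ∘ p.word l := fun l hl => if_pos hl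
  have hword' : ∀ l ∉ p.support, word l = u l := fun l hl => if_neg hl
  refine ⟨⟨s, hs, hps p.bot_mem_support, word, fun l => ?_, fun l => ?_⟩,
    ⟨hps, σ, fun l hl => congrFun (hword l hl)⟩, rfl, hword⟩ <;> by_cases hl : l ∈ p.support
  · rw [hword l hl]
    exact (computable_subst hσ).comp (p.computable_word l)
  · rw [hword' l hl]
    exact hu l
  · rw [hword l hl, range_comp, p.range_word, himage l hl]
  · rw [hword' l hl, hrange]

theorem exists_le_word_eq_truncation (p : Condition L) {t : Set L} (ht : t.Finite) (N : ℕ)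
    (v : Bool) : ∃ q, p ≤ q ∧ q.support = p.support ∧
      ∀ l ∈ p.support, q.word l = subst (truncation t N v) ∘ p.word l :=
  p.exists_le_word_eq_subst p.finite_support Subset.rfl (computable_truncation ht N v)
    fun _ _ => image_truncation_lettersOver _ t N v

theorem exists_le_word_eq_inl (p : Condition L) (hl : l ∈ p.support) (z : ℕ) :
    ∃ q, p ≤ q ∧ (∃ v, q.word l z = Sum.inl v) ∧ ∀ k ∈ p.support, ∀ a x n, ¬x ≤ l →
      p.word k a = Sum.inr (x, n) → q.word k a = Sum.inr (x, n) := by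
  rcases hz : p.word l z with v | ⟨y, m⟩
  · exact ⟨p, le_rfl, ⟨v, hz⟩, fun _ _ _ _ _ _ h => h⟩
  have hyl : y ≤ l := by
    have hmem := p.range_word l ▸ mem_range_self z
    rw [hz, inr_mem_lettersOver] at hmem
    exact hmem.2.2
  obtain ⟨q, hpq, -, hword⟩ := p.exists_le_word_eq_truncation (finite_singleton y) (m + 1) false
  refine ⟨q, hpq, ⟨false, ?_⟩, fun k hk a x n hxl ha => ?_⟩
  · rw [hword l hl, Function.comp_apply, hz, subst_inr,
      truncation_of_lt (mem_singleton y) m.lt_succ_self]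
  · have hxy : x ∉ ({y} : Set L) := fun h => hxl (h ▸ hyl)
    rw [hword k hk, Function.comp_apply, ha, subst_inr, truncation_of_notMem hxy]

/-- The condition forces that `f` does not reduce the set at `j` to the set at `i`. -/
def RefutesReduction (q : Condition L) (i j : L) (f : ℕ → ℕ) : Prop :=
  i ∈ q.support ∧ j ∈ q.support ∧
    ∃ z v, q.word j z = Sum.inl v ∧ q.word i (f z) = Sum.inl (!v)

theorem exists_le_refutesReduction (p : Condition L) {i j : L} (hi : i ∈ p.support)
    (hj : j ∈ p.support) (hij : i < j) (f : ℕ → ℕ) : ∃ q, p ≤ q ∧ q.RefutesReduction i j f := by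
  obtain ⟨z, hz⟩ : Sum.inr (j, 0) ∈ range (p.word j) := by
    simpa [p.range_word, hj] using bot_le.trans_lt hij
  obtain ⟨q, hpq, ⟨v, hv⟩, hq⟩ := p.exists_le_word_eq_inl hi (f z)
  have hjz : q.word j z = Sum.inr (j, 0) := hq j hj z j 0 hij.not_ge hz
  obtain ⟨r, hqr, -, hword⟩ := q.exists_le_word_eq_truncation (finite_singleton j) 1 (!v)
  refine ⟨r, hpq.trans hqr, hqr.1 (hpq.1 hi), hqr.1 (hpq.1 hj), z, !v, ?_, ?_⟩
  · rw [hword j (hpq.1 hj), Function.comp_apply, hjz, subst_inr,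
      truncation_of_lt (mem_singleton j) one_pos]
  · rw [hword i (hpq.1 hi), Function.comp_apply, hv, subst_inl, Bool.not_not]

theorem exists_le_range_subset_lettersOver_diff (p : Condition L) (hl : l ∈ p.support)
    (f : ℕ → ℕ) {t : Set L} (ht : t.Finite)
    (hfin : ∀ x ∈ t, (columnIndices (range (p.word l ∘ f)) x).Finite) :
    ∃ q, p ≤ q ∧ q.support = p.support ∧
      range (q.word l ∘ f) ⊆ lettersOver ((p.support ∩ Ioc ⊥ l) \ t) ∧
      ∀ x ∉ t, columnIndices (range (p.word l ∘ f)) x ⊆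
        columnIndices (range (q.word l ∘ f)) x := by
  obtain ⟨N, hN⟩ := exists_subst_truncation_mem_lettersOver_compl ht hfin false
  obtain ⟨q, hpq, hsupp, hword⟩ := p.exists_le_word_eq_truncation ht N false
  refine ⟨q, hpq, hsupp, ?_, fun x hx n => ?_⟩
  · rintro _ ⟨z, rfl⟩ x n hz
    have hx : x ∈ q.support ∩ Ioc ⊥ l :=
      (q.range_word l).subset (mem_range_self (f z)) x n hz
    have hxt : x ∈ tᶜ :=
      hN _ (mem_range_self z) x n (by rw [← hz, hword l hl]; rfl)
    exact ⟨hsupp ▸ hx, hxt⟩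
  · rintro ⟨z, hz⟩
    refine ⟨z, ?_⟩
    rw [hword l hl, Function.comp_assoc, Function.comp_apply, hz, subst_inr,
      truncation_of_notMem hx]

theorem exists_le_range_comp_eq_range (p : Condition L) {j : L} (hl : l ∈ p.support)
    (hj : j ∈ p.support) {f : ℕ → ℕ} (hf : Computable f)
    (hsub : range (p.word l ∘ f) ⊆ lettersOver (p.support ∩ Ioc ⊥ j))
    (hinf : (columnIndices (range (p.word l ∘ f)) j).Infinite) :
    ∃ q, p ≤ q ∧ range (q.word l ∘ f) = range (q.word j) := by
  obtain ⟨k, hk, hkrange⟩ :=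
    exists_computable_range_eq_columnIndices ((p.computable_word l).comp hf) hinf.nonempty
  obtain ⟨c, hc, hcrange, hcimage⟩ :=
    exists_computable_image_range_eq hk (hkrange ▸ hinf) (p.computable_word j)
  rw [p.range_word] at hcrange hcimage
  rw [hkrange] at hcimage
  have himage : ∀ i, subst (columnSubst j c) '' lettersOver (p.support ∩ Ioc ⊥ i) =
      lettersOver (p.support ∩ Ioc ⊥ i) := fun i => by
    by_cases hji : j ∈ p.support ∩ Ioc ⊥ i
    · refine image_columnSubst_lettersOver hji Subset.rfl ?_ fun y hy m => ?_
      · rw [hcrange]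
        exact lettersOver_mono (inter_subset_inter_right _ (Ioc_subset_Ioc_right hji.2.2))
      · obtain rfl : y = j := by simpa using hy
        simpa [hcrange, hj] using hji.2.1
    · exact image_columnSubst_lettersOver_of_notMem hji c
  obtain ⟨q, hpq, hsupp, hword⟩ :=
    p.exists_le_word_eq_subst p.finite_support Subset.rfl (computable_columnSubst j hc)
      fun i _ => himage i
  refine ⟨q, hpq, ?_⟩
  rw [hword l hl, Function.comp_assoc, range_comp, q.range_word, hsupp]
  refine Subset.antisymm ((image_mono hsub).trans (himage j).subset) ?_
  rw [← hcimage]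
  rintro _ ⟨n, hn, rfl⟩
  exact ⟨Sum.inr (j, n), hn, columnSubst_self j c n⟩

/-- The condition settles where the preimage under `f` of the set at `l` lies: either all letters
along `f` are decided, or the preimage is forced to be equivalent to the set at some `j`. -/
def SettlesPreimage (q : Condition L) (l : L) (f : ℕ → ℕ) : Prop :=
  l ∈ q.support ∧ (range (q.word l ∘ f) ⊆ range Sum.inl ∨
    ∃ j ∈ q.support, range (q.word l ∘ f) = range (q.word j))

end Preorder

section LinearOrder

variable {L : Type*} [LinearOrder L] [OrderBot L] [Primcodable L]

theorem exists_le_mem_support (p : Condition L) (l : L) : ∃ q, p ≤ q ∧ l ∈ q.support := by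
  by_cases hl : l ∈ p.support
  · exact ⟨p, le_rfl, hl⟩
  have hbot : l ≠ ⊥ := fun h => hl (h ▸ p.bot_mem_support)
  obtain ⟨σ, hσ, himage⟩ :=
    exists_computable_image_subst_lettersOver_insert p.finite_support hl hbot
  obtain ⟨q, hpq, hsupp, -⟩ := p.exists_le_word_eq_subst (p.finite_support.insert l)
    (subset_insert l _) hσ himage
  exact ⟨q, hpq, hsupp ▸ mem_insert l _⟩

theorem exists_le_settlesPreimage (p : Condition L) {l : L} (hl : l ∈ p.support) {f : ℕ → ℕ}
    (hf : Computable f) : ∃ q, p ≤ q ∧ q.SettlesPreimage l f := by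
  let J := {x ∈ p.support | (columnIndices (range (p.word l ∘ f)) x).Infinite}
  rcases J.eq_empty_or_nonempty with hJ | hJ
  · have hfin : ∀ x ∈ p.support, (columnIndices (range (p.word l ∘ f)) x).Finite :=
      fun x hx => not_infinite.1 fun hinf => hJ.subset ⟨hx, hinf⟩
    obtain ⟨q, hpq, -, hsub, -⟩ :=
      p.exists_le_range_subset_lettersOver_diff hl f p.finite_support hfin
    rw [sdiff_eq_empty.2 inter_subset_left, lettersOver_empty] at hsub
    exact ⟨q, hpq, hpq.1 hl, Or.inl hsub⟩
  · obtain ⟨j, ⟨hj, hjinf⟩, hmax⟩ :=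
      exists_max_image J id (p.finite_support.subset (sep_subset _ _)) hJ
    have hfin : ∀ x ∈ p.support ∩ Ioi j, (columnIndices (range (p.word l ∘ f)) x).Finite :=
      fun x hx => not_infinite.1 fun hinf => (hmax x ⟨hx.1, hinf⟩).not_gt hx.2
    obtain ⟨q, hpq, hsupp, hsub, hmono⟩ :=
      p.exists_le_range_subset_lettersOver_diff hl f (p.finite_support.inter_of_left _) hfin
    have hbelow : (p.support ∩ Ioc ⊥ l) \ (p.support ∩ Ioi j) ⊆ q.support ∩ Ioc ⊥ j :=
      fun x hx => ⟨hsupp ▸ hx.1.1, hx.1.2.1, not_lt.1 fun hjx => hx.2 ⟨hx.1.1, hjx⟩⟩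
    obtain ⟨r, hqr, hr⟩ := q.exists_le_range_comp_eq_range (hpq.1 hl) (hpq.1 hj) hf
      (hsub.trans (lettersOver_mono hbelow))
      (hjinf.mono (hmono j fun hjj => lt_irrefl j hjj.2))
    exact ⟨r, hpq.trans hqr, hqr.1 (hpq.1 hl), Or.inr ⟨j, hqr.1 (hpq.1 hj), hr⟩⟩

theorem isCofinal_settlesPreimage (l : L) {f : ℕ → ℕ} (hf : Computable f) :
    IsCofinal {q : Condition L | q.SettlesPreimage l f} := fun p => by
  obtain ⟨q, hpq, hl⟩ := p.exists_le_mem_support l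
  obtain ⟨r, hqr, hr⟩ := q.exists_le_settlesPreimage hl hf
  exact ⟨r, hr, hpq.trans hqr⟩

theorem isCofinal_refutesReduction {i j : L} (hij : i < j) (f : ℕ → ℕ) :
    IsCofinal {q : Condition L | q.RefutesReduction i j f} := fun p => by
  obtain ⟨q, hpq, hi⟩ := p.exists_le_mem_support i
  obtain ⟨r, hqr, hj⟩ := q.exists_le_mem_support j
  obtain ⟨s, hrs, hs⟩ := r.exists_le_refutesReduction (hqr.1 hi) hj hij f
  exact ⟨s, hs, hpq.trans (hqr.trans hrs)⟩

end LinearOrder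

end Condition

section Generic

variable {L : Type*} [Preorder L] [OrderBot L] [Primcodable L] {I : Order.Ideal (Condition L)}

/-- An ideal of conditions that meets the dense sets needed for the initial segment. -/
structure IsGeneric (I : Order.Ideal (Condition L)) : Prop where
  exists_settlesPreimage : ∀ (l : L) (f : ℕ → ℕ), Computable f → ∃ p ∈ I, p.SettlesPreimage l f
  exists_refutesReduction : ∀ (i j : L) (f : ℕ → ℕ), i < j → Computable f →
    ∃ p ∈ I, p.RefutesReduction i j f

theorem exists_isGeneric (L : Type*) [LinearOrder L] [OrderBot L] [Primcodable L] :
    ∃ I : Order.Ideal (Condition L), IsGeneric I := by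
  let D : (L × {f : ℕ → ℕ // Computable f}) ⊕
      ({w : L × L // w.1 < w.2} × {f : ℕ → ℕ // Computable f}) → Set (Condition L) :=
    Sum.elim (fun w => {q | q.SettlesPreimage w.1 w.2.1})
      fun w => {q | q.RefutesReduction w.1.1.1 w.1.1.2 w.2.1}
  have hD : ∀ w, IsCofinal (D w) := by
    rintro (w | w)
    · exact Condition.isCofinal_settlesPreimage w.1 w.2.2
    · exact Condition.isCofinal_refutesReduction w.1.2 w.2.1
  obtain ⟨I, hI⟩ := exists_ideal_forall_exists_mem hD
  exact ⟨I, fun l f hf => hI (Sum.inl (l, ⟨f, hf⟩)),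
    fun i j f hij hf => hI (Sum.inr (⟨(i, j), hij⟩, ⟨f, hf⟩))⟩

/-- The limit of the `l`-th words of the conditions in `I`, as a predicate: the `z`-th letter
eventually becomes the bit `true`. -/
def limitSet (I : Order.Ideal (Condition L)) (l : L) : ℕ → Prop := fun z =>
  ∃ p ∈ I, l ∈ p.support ∧ p.word l z = Sum.inl true

variable {p : Condition L} {l k : L}

theorem limitSet_iff_exists_le (hp : p ∈ I) (hl : l ∈ p.support) {z : ℕ} :
    limitSet I l z ↔ ∃ q ∈ I, p ≤ q ∧ q.word l z = Sum.inl true := by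
  refine ⟨fun ⟨q, hq, hlq, hqz⟩ => ?_, fun ⟨q, hq, hpq, hqz⟩ => ⟨q, hq, hpq.1 hl, hqz⟩⟩
  obtain ⟨r, hr, hpr, -, σ, hσ⟩ := I.directed p hp q hq
  exact ⟨r, hr, hpr, by rw [hσ l hlq, hqz, subst_inl]⟩

theorem limitSet_congr (hp : p ∈ I) (hl : l ∈ p.support) (hk : k ∈ p.support) {y z : ℕ}
    (h : p.word l y = p.word k z) : limitSet I l y ↔ limitSet I k z := by
  rw [limitSet_iff_exists_le hp hl, limitSet_iff_exists_le hp hk]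
  refine exists_congr fun q => and_congr_right fun _ => and_congr_right fun ⟨_, σ, hσ⟩ => ?_
  rw [hσ l hl, hσ k hk, h]

theorem limitSet_iff_of_word_eq_inl (hp : p ∈ I) (hl : l ∈ p.support) {z : ℕ} {v : Bool}
    (h : p.word l z = Sum.inl v) : limitSet I l z ↔ v = true := by
  rw [limitSet_iff_exists_le hp hl]
  refine ⟨fun ⟨q, _, ⟨_, σ, hσ⟩, hqz⟩ => ?_, fun hv => ⟨p, hp, le_rfl, hv ▸ h⟩⟩
  rw [hσ l hl, h, subst_inl] at hqz
  exact Sum.inl_injective hqz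

theorem limitSet_comp_manyOneReducible (hp : p ∈ I) (hl : l ∈ p.support) (hk : k ∈ p.support)
    {f g : ℕ → ℕ} (hf : Computable f) (hg : Computable g)
    (h : range (p.word l ∘ f) ⊆ range (p.word k ∘ g)) :
    (limitSet I l ∘ f) ≤₀ (limitSet I k ∘ g) := by
  classical
  have hexists : ∀ z, ∃ w, p.word l (f z) = p.word k (g w) := fun z =>
    (h (mem_range_self z)).imp fun _ hw => hw.symm
  have hdec : Computable fun zw : ℕ × ℕ => decide (p.word l (f zw.1) = p.word k (g zw.2)) :=
    Primrec.eq.decide.to_comp.comp (((p.computable_word l).comp hf).comp Computable.fst)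
      (((p.computable_word k).comp hg).comp Computable.snd)
  exact ⟨_, Computable.find hdec.computablePred hexists, fun z =>
    limitSet_congr hp hl hk (Nat.find_spec (hexists z))⟩

theorem limitSet_comp_manyOneEquiv (hp : p ∈ I) (hl : l ∈ p.support) (hk : k ∈ p.support)
    {f : ℕ → ℕ} (hf : Computable f) (h : range (p.word l ∘ f) = range (p.word k)) :
    ManyOneEquiv (limitSet I l ∘ f) (limitSet I k) :=
  ⟨limitSet_comp_manyOneReducible hp hl hk hf Computable.id h.subset,
    limitSet_comp_manyOneReducible hp hk hl Computable.id hf h.symm.subset⟩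

namespace IsGeneric

theorem exists_mem_support (hI : IsGeneric I) (l : L) : ∃ p ∈ I, l ∈ p.support := by
  obtain ⟨p, hp, hl, -⟩ := hI.exists_settlesPreimage l id Computable.id
  exact ⟨p, hp, hl⟩

theorem limitSet_nontrivial (hI : IsGeneric I) (l : L) :
    (∃ z, limitSet I l z) ∧ ∃ z, ¬limitSet I l z := by
  obtain ⟨p, hp, hl⟩ := hI.exists_mem_support l
  have hbit : ∀ v, ∃ z, p.word l z = Sum.inl v := fun v =>
    (p.range_word l).superset inl_mem_lettersOver
  obtain ⟨y, hy⟩ := hbit true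
  obtain ⟨z, hz⟩ := hbit false
  exact ⟨⟨y, (limitSet_iff_of_word_eq_inl hp hl hy).2 rfl⟩,
    z, by simp [limitSet_iff_of_word_eq_inl hp hl hz]⟩

theorem limitSet_manyOneReducible (hI : IsGeneric I) (hlk : l ≤ k) :
    limitSet I l ≤₀ limitSet I k := by
  obtain ⟨p, hp, hl⟩ := hI.exists_mem_support l
  obtain ⟨q, hq, hk⟩ := hI.exists_mem_support k
  obtain ⟨r, hr, hpr, hqr⟩ := I.directed p hp q hq
  exact limitSet_comp_manyOneReducible hr (hpr.1 hl) (hqr.1 hk) Computable.id Computable.id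
    (r.range_word_mono hlk)

theorem not_limitSet_manyOneReducible (hI : IsGeneric I) (hlk : l < k) :
    ¬limitSet I k ≤₀ limitSet I l := by
  rintro ⟨f, hf, hred⟩
  obtain ⟨p, hp, hl, hk, z, v, hkz, hlz⟩ := hI.exists_refutesReduction l k f hlk hf
  have hz := hred z
  rw [limitSet_iff_of_word_eq_inl hp hk hkz, limitSet_iff_of_word_eq_inl hp hl hlz] at hz
  cases v <;> simp at hz

theorem strictMono_of_limitSet (hI : IsGeneric I) :
    StrictMono fun l => ManyOneDegree.of (limitSet I l) := fun _ _ hlk =>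
  lt_of_le_not_ge (ManyOneDegree.of_le_of.2 (hI.limitSet_manyOneReducible hlk.le))
    fun h => hI.not_limitSet_manyOneReducible hlk (ManyOneDegree.of_le_of.1 h)

theorem exists_manyOneEquiv_limitSet (hI : IsGeneric I) {B : ℕ → Prop} (hB : B ≤₀ limitSet I l)
    (htrue : ∃ z, B z) (hfalse : ∃ z, ¬B z) : ∃ j, ManyOneEquiv B (limitSet I j) := by
  obtain ⟨f, hf, hred⟩ := hB
  obtain rfl : B = limitSet I l ∘ f := funext fun z => propext (hred z)
  obtain ⟨p, hp, hl, hbits | ⟨j, hj, hrange⟩⟩ := hI.exists_settlesPreimage l f hf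
  · refine ⟨⊥, limitSet_comp_manyOneEquiv hp hl p.bot_mem_support hf ?_⟩
    rw [p.range_word_bot]
    refine hbits.antisymm ?_
    rintro _ ⟨v, rfl⟩
    obtain ⟨z, hz⟩ : ∃ z, limitSet I l (f z) ↔ v = true := by
      cases v
      · simpa using hfalse
      · simpa using htrue
    obtain ⟨w, hw⟩ := hbits (mem_range_self z)
    have hwv : w = v :=
      Bool.eq_iff_iff.2 ((limitSet_iff_of_word_eq_inl hp hl hw.symm).symm.trans hz)
    exact ⟨z, hwv ▸ hw.symm⟩
  · exact ⟨j, limitSet_comp_manyOneEquiv hp hl hj hf hrange⟩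

end IsGeneric

end Generic

end ManyOneForcing

open ManyOneForcing in
/-- Every nonempty countable linear order with least element is isomorphic to a
downward-closed subset (initial segment) of the many-one degrees. -/
theorem initial_segment_of_many_one_degrees
    (L : Type*) [LinearOrder L] [Countable L] [Nonempty L]
    (hbot : ∃ b : L, ∀ x : L, b ≤ x) :
    ∃ S : Set ManyOneDegree, S ⊆ Dm ∧
      (∀ d ∈ S, ∀ d' ∈ Dm, d' ≤ d → d' ∈ S) ∧
      Nonempty (S ≃o L) := by
  obtain ⟨b, hb⟩ := hbot
  let _ : OrderBot L := { bot := b, bot_le := hb }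
  obtain ⟨_⟩ := nonempty_primcodable L
  obtain ⟨I, hI⟩ := exists_isGeneric L
  refine ⟨Set.range fun l => ManyOneDegree.of (limitSet I l), ?_, ?_,
    ⟨(hI.strictMono_of_limitSet.orderIso _).symm⟩⟩
  · rintro _ ⟨l, rfl⟩
    exact of_mem_Dm_iff.2 (hI.limitSet_nontrivial l)
  · rintro _ ⟨l, rfl⟩ d' hd' hle
    induction d' using ManyOneDegree.ind_on with
    | _ B =>
      obtain ⟨htrue, hfalse⟩ := of_mem_Dm_iff.1 hd'
      obtain ⟨j, hj⟩ :=
        hI.exists_manyOneEquiv_limitSet (ManyOneDegree.of_le_of.1 hle) htrue hfalse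
      exact ⟨j, (ManyOneDegree.of_eq_of.2 hj).symm⟩
end

section
/- Let U ⊆ ℕ, and let f, g : ℕ → ℕ be total computable functions with range(f) ⊆ range(g). Then f⁻¹(U) ≤ₘ g⁻¹(U). In other words, if W₁ ⊆ W₂ are nonempty computably enumerable sets, then Ψ_U(W₁) ≤ₘ Ψ_U(W₂), where Ψ_U(W) denotes f⁻¹(U) for a total computable f with range(f) = W. -/
/-!
Given `x`, search for a `y` with `g y = f x`. Equality of values is decidable and
`range f ⊆ range g` makes the search halt, so it computes an `h` with `g ∘ h = f`; this `h` is the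
required reduction, whatever `U` is.
-/

section

variable {α β γ : Type*} [Primcodable α] [Primcodable β] [Primcodable γ]

theorem exists_computable_mem_of_computable₂ {F : α → ℕ → Option β} (hF : Computable₂ F)
    (hex : ∀ a, ∃ n b, b ∈ F a n) :
    ∃ h : α → β, Computable h ∧ ∀ a, ∃ n, h a ∈ F a n := by
  have search_dom (a : α) : (Nat.rfindOpt (F a)).Dom := Nat.rfindOpt_dom.mpr (hex a)
  exact ⟨fun a => (Nat.rfindOpt (F a)).get (search_dom a),
    (Partrec.rfindOpt hF).of_eq_tot fun a => Part.get_mem (search_dom a),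
    fun a => Nat.rfindOpt_spec (Part.get_mem (search_dom a))⟩

theorem exists_computable_choice_of_computablePred {R : α → β → Prop}
    (hR : ComputablePred fun x : α × β => R x.1 x.2) (hex : ∀ a, ∃ b, R a b) :
    ∃ h : α → β, Computable h ∧ ∀ a, R a (h a) := by
  classical
  let guarded (a : α) (b : β) : Option β := bif decide (R a b) then some b else none
  have guarded_computable : Computable₂ guarded :=
    Computable.cond hR.decide (Computable.option_some.comp .snd) (.const none)
  have guarded_eq_some {a : α} {b c : β} : guarded a b = some c ↔ R a b ∧ b = c := by
    simp [guarded, Bool.cond_eq_ite]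
  have exists_candidate (a : α) : ∃ n c, c ∈ (Encodable.decode n).bind (guarded a) := by
    obtain ⟨b, hb⟩ := hex a
    exact ⟨Encodable.encode b, b, by simp [guarded_eq_some, hb]⟩
  obtain ⟨h, hh, hmem⟩ := exists_computable_mem_of_computable₂
    (Computable.bind_decode_iff.mpr guarded_computable) exists_candidate
  refine ⟨h, hh, fun a => ?_⟩
  obtain ⟨n, hn⟩ := hmem a
  obtain ⟨b, -, hb⟩ := Option.bind_eq_some_iff.mp hn
  obtain ⟨hRab, rfl⟩ := guarded_eq_some.mp hb
  exact hRab

theorem computablePred_eq_of_computable {f g : α → γ} (hf : Computable f) (hg : Computable g) :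
    ComputablePred fun x => f x = g x := by
  classical
  exact (Primrec.eq.decide.to_comp.comp hf hg).computablePred

theorem exists_computable_comp_eq_of_range_subset {f : α → γ} {g : β → γ}
    (hf : Computable f) (hg : Computable g) (hrange : Set.range f ⊆ Set.range g) :
    ∃ h : α → β, Computable h ∧ g ∘ h = f := by
  have hex (a : α) : ∃ b, g b = f a := Set.range_subset_iff.mp hrange a
  have hdec : ComputablePred fun x : α × β => g x.2 = f x.1 :=
    computablePred_eq_of_computable (hg.comp .snd) (hf.comp .fst)
  obtain ⟨h, hh, hgh⟩ := exists_computable_choice_of_computablePred hdec hex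
  exact ⟨h, hh, funext hgh⟩

theorem preimage_manyOneReducible_of_range_subset_general (U : Set γ) {f : α → γ} {g : β → γ}
    (hf : Computable f) (hg : Computable g) (hrange : Set.range f ⊆ Set.range g) :
    ManyOneReducible (fun x : α => f x ∈ U) (fun x : β => g x ∈ U) := by
  obtain ⟨h, hh, rfl⟩ := exists_computable_comp_eq_of_range_subset hf hg hrange
  exact .mk (fun x => g x ∈ U) hh

end

/-- If `f` and `g` are total computable functions with `range f ⊆ range g`, then
`f⁻¹(U) ≤ₘ g⁻¹(U)`; i.e., `W₁ ⊆ W₂` implies `Ψ_U(W₁) ≤ₘ Ψ_U(W₂)`. -/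
theorem preimage_manyOneReducible_of_range_subset
    (U : Set ℕ) (f g : ℕ → ℕ) (hf : Computable f) (hg : Computable g)
    (hrange : Set.range f ⊆ Set.range g) :
    ManyOneReducible (fun x : ℕ => f x ∈ U) (fun x : ℕ => g x ∈ U) :=
  preimage_manyOneReducible_of_range_subset_general U hf hg hrange
end
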